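/- Let G be drawn from a distribution in NSSBM(n,p,p̄,q) with α := p̄/(p−q) constant, satisfying the gap condition n(p−q) ≥ C₀·(√(n·p̄·log n) + log n) for a sufficiently large universal constant C₀. Then for n sufficiently large (depending only on α) and any δ ≥ n^{−10}, with probability at least 1 − δ, every vertex v ∈ V satisfies d[v] − λ2 > n(p−q)/4, where λ2 is the second smallest eigenvalue of the unnormalized Laplacian of G. -/

import Mathlib

open Matrix MeasureTheory
open scoped BigOperators ENNReal Classical

noncomputable section

instance measSG {n : ℕ} : MeasurableSpace (SimpleGraph (Fin n)) := ⊤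

variable {n : ℕ}

/-- Adjacency matrix of a graph, over `ℝ`. -/
def adjM (G : SimpleGraph (Fin n)) : Matrix (Fin n) (Fin n) ℝ :=
  Matrix.of fun v w => if G.Adj v w then 1 else 0

/-- Laplacian of a weighted adjacency matrix. -/
def wlap (W : Matrix (Fin n) (Fin n) ℝ) : Matrix (Fin n) (Fin n) ℝ :=
  Matrix.diagonal (fun v => ∑ w, W v w) - W

/-- Unnormalized Laplacian of a graph. -/
def lap (G : SimpleGraph (Fin n)) : Matrix (Fin n) (Fin n) ℝ := wlap (adjM G)

/-- `eig M k` is the `(k+1)`-st smallest eigenvalue (root of the characteristic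
polynomial, with multiplicity) of `M`; e.g. `eig M 1 = λ₂`. -/
def eig (M : Matrix (Fin n) (Fin n) ℝ) (k : ℕ) : ℝ :=
  (M.charpoly.roots.sort (· ≤ ·)).getD k 0

def IsUnitEigenvector (M : Matrix (Fin n) (Fin n) ℝ) (t : ℝ) (u : Fin n → ℝ) : Prop :=
  M.mulVec u = t • u ∧ ∑ v, (u v) ^ 2 = 1

/-- Membership in the first community `P₁ = {1, …, n/2}`. -/
def inP1 (n : ℕ) (v : Fin n) : Prop := (v : ℕ) < n / 2

/-- `v` and `w` are in the same community. -/
def sameSide (n : ℕ) (v w : Fin n) : Prop := inP1 n v ↔ inP1 n w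

/-- Number of neighbours of `v` in its own community. -/
def din (G : SimpleGraph (Fin n)) (v : Fin n) : ℕ :=
  Nat.card {w : Fin n // G.Adj v w ∧ sameSide n v w}

/-- Number of neighbours of `v` in the other community. -/
def dout (G : SimpleGraph (Fin n)) (v : Fin n) : ℕ :=
  Nat.card {w : Fin n // G.Adj v w ∧ ¬ sameSide n v w}

/-- Degree of `v`. -/
def deg (G : SimpleGraph (Fin n)) (v : Fin n) : ℕ :=
  Nat.card {w : Fin n // G.Adj v w}

/-- `μ` samples each pair `(v,w)`, `v < w`, as an edge independently with probability `P v w`. -/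
def IsEdgeProduct (P : Fin n → Fin n → ℝ) (μ : PMF (SimpleGraph (Fin n))) : Prop :=
  ∀ G : SimpleGraph (Fin n),
    μ G = ∏ e ∈ Finset.univ.filter (fun e : Fin n × Fin n => e.1 < e.2),
      (if G.Adj e.1 e.2 then ENNReal.ofReal (P e.1 e.2) else ENNReal.ofReal (1 - P e.1 e.2))

/-- The edge-probability matrix of a member of the `NSSBM(n,p,p̄,q)` family. -/
def NSSBMprob (n : ℕ) (p pbar q : ℝ) (P : Fin n → Fin n → ℝ) : Prop :=
  (∀ v w, P v w = P w v) ∧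
  (∀ v w : Fin n, v ≠ w → sameSide n v w → p ≤ P v w ∧ P v w ≤ pbar) ∧
  (∀ v w : Fin n, ¬ sameSide n v w → P v w = q)

/-- The ideal second eigenvector `u₂⋆`. -/
def u2star (n : ℕ) : Fin n → ℝ :=
  fun v => if inP1 n v then 1 / Real.sqrt n else -(1 / Real.sqrt n)

/-- Spectral bisection with matrix `M` recovers the planted partition of `G`. -/
def BisectCorrect (n : ℕ) (M : Matrix (Fin n) (Fin n) ℝ) : Prop :=
  ∀ u : Fin n → ℝ, IsUnitEigenvector M (eig M 1) u →
    ({v : Fin n | u v < 0} = {v : Fin n | inP1 n v} ∨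
     {v : Fin n | u v < 0} = {v : Fin n | ¬ inP1 n v})

/-- Off-diagonal part of the probability matrix: the expected adjacency matrix. -/
def offP (P : Fin n → Fin n → ℝ) : Matrix (Fin n) (Fin n) ℝ :=
  Matrix.of fun v w => if v = w then 0 else P v w

/-- Expected unnormalized Laplacian. -/
def expLap (P : Fin n → Fin n → ℝ) : Matrix (Fin n) (Fin n) ℝ := wlap (offP P)

/-- Euclidean norm. -/
def l2 (x : Fin n → ℝ) : ℝ := Real.sqrt (∑ v, (x v) ^ 2)

/-- Inner product. -/
def dotp (x y : Fin n → ℝ) : ℝ := ∑ v, x v * y v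

/-- Entrywise max (ℓ∞) norm. -/
def linf (x : Fin n → ℝ) : ℝ := ⨆ v, |x v|

/-- ℓ2 → ℓ2 operator norm of a matrix. -/
def opNorm (M : Matrix (Fin n) (Fin n) ℝ) : ℝ :=
  ‖LinearMap.toContinuousLinearMap (Matrix.toEuclideanLin M)‖

/-- The crossing edges of `μ` are independent `Bernoulli(q)`, while the internal
edges are arbitrary (possibly depending on the crossing edges). -/
def CrossingProduct (n : ℕ) (q : ℝ) (μ : PMF (SimpleGraph (Fin n))) : Prop :=
  ∃ (ν : PMF (SimpleGraph (Fin n))) (κ : SimpleGraph (Fin n) → PMF (SimpleGraph (Fin n))),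
    IsEdgeProduct (fun v w => if sameSide n v w then 0 else q) ν ∧
    (∀ H, ∀ G ∈ (κ H).support, ∀ v w, ¬ sameSide n v w → ((G.Adj v w) ↔ H.Adj v w)) ∧
    μ = ν.bind κ

/-!
Write `u₂⋆` for the normalised signed indicator of the two communities. By Courant–Fischer on the
plane spanned by `1` and `u₂⋆`, `λ₂ ≤ u₂⋆ᵀ L u₂⋆`, and the right side is `4 / n` times the number of
crossing edges. Hence `λ₂ - d[v]` is at most a linear statistic of the independent edges, whose
coefficients are at most `1` in absolute value, whose mean is at most `p - n(p - q)/2` and whose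
variance is at most `2 n p̄`. Under the gap condition a deviation by `n(p - q)/8` has probability at
most `n⁻¹¹` by Bernstein's inequality, and a union bound over `v` finishes.
-/

open ProbabilityTheory

section SortedList

variable {α : Type*} [LinearOrder α]

lemma countP_le_of_lt_getD {l : List α} (hl : l.SortedLE) {k : ℕ} {r d : α}
    (hr : r < l.getD k d) : l.countP (· ≤ r) ≤ k := by
  have hdrop : (l.drop k).countP (· ≤ r) = 0 := by
    refine List.countP_eq_zero.2 fun a ha => ?_
    obtain ⟨i, hi, rfl⟩ := List.mem_drop_iff_getElem.1 ha
    rw [List.getD_eq_getElem _ _ (by omega)] at hr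
    simpa using hr.trans_le
      (List.sortedLE_iff_getElem_le_getElem_of_le.1 hl (Nat.le_add_right k i))
  calc l.countP (· ≤ r) = (l.take k).countP (· ≤ r) + (l.drop k).countP (· ≤ r) := by
        rw [← List.countP_append, List.take_append_drop]
    _ ≤ k := by
        rw [hdrop, add_zero]
        exact List.countP_le_length.trans (List.length_take_le k l)

end SortedList

section CourantFischer

variable {ι : Type*} [Fintype ι] [DecidableEq ι] {M : Matrix ι ι ℝ}

lemma sum_eigenvectorBasis_dotProduct_mul (hM : M.IsHermitian) (x y : ι → ℝ) :
    ∑ i, ((hM.eigenvectorBasis i).ofLp ⬝ᵥ x) * ((hM.eigenvectorBasis i).ofLp ⬝ᵥ y)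
      = x ⬝ᵥ y := by
  have h := hM.eigenvectorBasis.sum_inner_mul_inner (WithLp.toLp 2 x) (WithLp.toLp 2 y)
  simp only [EuclideanSpace.inner_eq_star_dotProduct, star_trivial] at h
  rw [dotProduct_comm x y, ← h]
  exact Finset.sum_congr rfl fun i _ => by rw [dotProduct_comm y]

lemma eigenvectorBasis_dotProduct_mulVec (hM : M.IsHermitian) (x : ι → ℝ) (i : ι) :
    (hM.eigenvectorBasis i).ofLp ⬝ᵥ M *ᵥ x
      = hM.eigenvalues i * ((hM.eigenvectorBasis i).ofLp ⬝ᵥ x) := by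
  have hMT : Mᵀ = M := by simpa only [conjTranspose_eq_transpose_of_trivial] using hM.eq
  rw [dotProduct_mulVec, ← mulVec_transpose, hMT, hM.mulVec_eigenvectorBasis, smul_dotProduct,
    smul_eq_mul]

lemma mul_dotProduct_self_lt_dotProduct_mulVec (hM : M.IsHermitian) {x : ι → ℝ} (hx : x ≠ 0)
    {r : ℝ} (h : ∀ i, hM.eigenvalues i ≤ r → (hM.eigenvectorBasis i).ofLp ⬝ᵥ x = 0) :
    r * (x ⬝ᵥ x) < x ⬝ᵥ M *ᵥ x := by
  rw [← sum_eigenvectorBasis_dotProduct_mul hM x x,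
    ← sum_eigenvectorBasis_dotProduct_mul hM x (M *ᵥ x), Finset.mul_sum]
  simp only [eigenvectorBasis_dotProduct_mulVec, mul_left_comm _ (hM.eigenvalues _)]
  refine Finset.sum_lt_sum (fun i _ => ?_) ?_
  · rcases le_or_gt (hM.eigenvalues i) r with hi | hi
    · simp [h i hi]
    · exact mul_le_mul_of_nonneg_right hi.le (mul_self_nonneg _)
  · obtain ⟨i, hi⟩ : ∃ i, (hM.eigenvectorBasis i).ofLp ⬝ᵥ x ≠ 0 := by
      contrapose! hx
      rw [← dotProduct_self_eq_zero, ← sum_eigenvectorBasis_dotProduct_mul hM x x]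
      simp [hx]
    exact ⟨i, Finset.mem_univ i, mul_lt_mul_of_pos_right
      (lt_of_not_ge fun hle => hi (h i hle)) (mul_self_pos.2 hi)⟩

lemma card_eigenvalues_le_of_lt_eig {M : Matrix (Fin n) (Fin n) ℝ} (hM : M.IsHermitian) {k : ℕ}
    {r : ℝ} (hr : r < eig M k) : Fintype.card {i // hM.eigenvalues i ≤ r} ≤ k := by
  have h := countP_le_of_lt_getD (Multiset.pairwise_sort _ _).sortedLE hr
  rw [← Multiset.coe_countP, Multiset.sort_eq, hM.roots_charpoly_eq_eigenvalues,
    Multiset.countP_map] at h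
  rw [Fintype.card_subtype]
  simpa [Finset.card, Finset.filter] using h

lemma eig_le_of_forall_dotProduct_mulVec_le {M : Matrix (Fin n) (Fin n) ℝ} (hM : M.IsHermitian)
    {k : ℕ} {W : Submodule ℝ (Fin n → ℝ)} (hW : k < Module.finrank ℝ W) {r : ℝ}
    (h : ∀ x ∈ W, x ⬝ᵥ M *ᵥ x ≤ r * (x ⬝ᵥ x)) : eig M k ≤ r := by
  by_contra! hr
  let E : Matrix {i // hM.eigenvalues i ≤ r} (Fin n) ℝ :=
    Matrix.of fun i => (hM.eigenvectorBasis i).ofLp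
  have hker : (E.mulVecLin.comp W.subtype).ker ≠ ⊥ := by
    refine LinearMap.ker_ne_bot_of_finrank_lt ?_
    rw [Module.finrank_fintype_fun_eq_card]
    exact (card_eigenvalues_le_of_lt_eig hM hr).trans_lt hW
  obtain ⟨⟨x, hxW⟩, hxE, hx⟩ := Submodule.exists_mem_ne_zero_of_ne_bot hker
  refine (h x hxW).not_gt (mul_dotProduct_self_lt_dotProduct_mulVec hM (by simpa using hx) ?_)
  exact fun i hi => congrFun (LinearMap.mem_ker.1 hxE) ⟨i, hi⟩

end CourantFischer

section EdgeSums

/-- The pairs `v < w` indexing the potential edges, as in `IsEdgeProduct`. -/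
def edgePairs (n : ℕ) : Finset (Fin n × Fin n) :=
  Finset.univ.filter fun e : Fin n × Fin n => e.1 < e.2

/-- The linear statistic `∑_{v < w} W v w * c v w` of the edge weights `W` with coefficients `c`.
At `W = adjM G` it sums `c` over the edges of `G`; its mean is its value at `W = offP P`. -/
def edgeSum (W : Matrix (Fin n) (Fin n) ℝ) (c : Fin n → Fin n → ℝ) : ℝ :=
  ∑ e ∈ edgePairs n, W e.1 e.2 * c e.1 e.2

lemma mem_edgePairs {e : Fin n × Fin n} : e ∈ edgePairs n ↔ e.1 < e.2 := by simp [edgePairs]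

lemma sum_edgePairs {R : Type*} [AddCommMonoid R] (f : Fin n → Fin n → R) :
    ∑ e ∈ edgePairs n, f e.1 e.2 = ∑ v, ∑ w, if v < w then f v w else 0 := by
  rw [edgePairs, Finset.sum_filter, Fintype.sum_prod_type]

lemma sum_edgePairs_add_swap {R : Type*} [AddCommMonoid R] {f : Fin n → Fin n → R}
    (hf : ∀ v, f v v = 0) :
    ∑ e ∈ edgePairs n, (f e.1 e.2 + f e.2 e.1) = ∑ v, ∑ w, f v w := by
  rw [Finset.sum_add_distrib, sum_edgePairs, sum_edgePairs fun v w => f w v,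
    Finset.sum_comm (f := fun v w => if v < w then f w v else 0), ← Finset.sum_add_distrib]
  refine Finset.sum_congr rfl fun v _ => ?_
  rw [← Finset.sum_add_distrib]
  refine Finset.sum_congr rfl fun w _ => ?_
  rcases lt_trichotomy v w with h | rfl | h
  · simp [h, h.not_gt]
  · simp [hf]
  · simp [h, h.not_gt]

lemma sum_prod_edgePairs_ite {R : Type*} [CommSemiring R] (f g : Fin n × Fin n → R) :
    ∑ G : SimpleGraph (Fin n), ∏ e ∈ edgePairs n, (if G.Adj e.1 e.2 then f e else g e)
      = ∏ e ∈ edgePairs n, (f e + g e) := by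
  rw [Finset.prod_add]
  refine Finset.sum_nbij' (fun G => (edgePairs n).filter fun e => G.Adj e.1 e.2)
    (fun s => SimpleGraph.fromRel fun v w => (v, w) ∈ s) ?_ ?_ ?_ ?_ ?_
  · exact fun G _ => Finset.mem_powerset.2 (Finset.filter_subset _ _)
  · exact fun s _ => Finset.mem_univ _
  · intro G _
    ext v w
    have := G.ne_of_adj (a := v) (b := w)
    rcases lt_trichotomy v w with h | rfl | h
    · simp [mem_edgePairs, h, h.ne, h.not_gt]
    · simp
    · simp [mem_edgePairs, h, h.ne', h.not_gt, G.adj_comm v w]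
  · intro s hs
    ext ⟨v, w⟩
    have hlt : ∀ {v w}, (v, w) ∈ s → v < w := fun h => mem_edgePairs.1 (Finset.mem_powerset.1 hs h)
    grind [SimpleGraph.fromRel_adj, mem_edgePairs]
  · intro G _
    rw [Finset.prod_ite, Finset.filter_not]

end EdgeSums

section Laplacian

variable {W : Matrix (Fin n) (Fin n) ℝ}

lemma adjM_isSymm (G : SimpleGraph (Fin n)) : (adjM G).IsSymm :=
  Matrix.IsSymm.ext fun v w => by simp [adjM, G.adj_comm]

lemma adjM_nonneg (G : SimpleGraph (Fin n)) (v w : Fin n) : 0 ≤ adjM G v w := by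
  simp only [adjM, Matrix.of_apply]
  positivity

lemma adjM_self (G : SimpleGraph (Fin n)) (v : Fin n) : adjM G v v = 0 := by simp [adjM]

lemma sum_adjM (G : SimpleGraph (Fin n)) (v : Fin n) : ∑ w, adjM G v w = deg G v := by
  simp [adjM, deg, Nat.card_eq_fintype_card, Fintype.card_subtype]

lemma wlap_isHermitian (hW : W.IsSymm) : (wlap W).IsHermitian :=
  (Matrix.isHermitian_diagonal _).sub
    (by rw [Matrix.IsHermitian, conjTranspose_eq_transpose_of_trivial, hW.eq])

lemma dotProduct_wlap_mulVec (hW : W.IsSymm) (x : Fin n → ℝ) :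
    x ⬝ᵥ wlap W *ᵥ x = edgeSum W fun v w => (x v - x w) ^ 2 := by
  have hsum : x ⬝ᵥ wlap W *ᵥ x = ∑ v, ∑ w, W v w * (x v * (x v - x w)) := by
    rw [wlap, Matrix.sub_mulVec]
    refine Finset.sum_congr rfl fun v _ => ?_
    rw [Pi.sub_apply, mulVec_diagonal, mulVec, dotProduct, Finset.sum_mul,
      ← Finset.sum_sub_distrib, Finset.mul_sum]
    exact Finset.sum_congr rfl fun w _ => by ring
  rw [hsum, ← sum_edgePairs_add_swap (fun v => by simp), edgeSum]
  refine Finset.sum_congr rfl fun e _ => ?_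
  rw [hW.apply e.1 e.2]
  ring

/-- The plane spanned by `1` and `x` serves as test space: the quadratic form ignores `1`. -/
lemma eig_wlap_one_le (hW : W.IsSymm) {x : Fin n → ℝ} (hx : ∑ v, x v = 0) (hx0 : x ≠ 0) {r : ℝ}
    (hr : 0 ≤ r) (h : x ⬝ᵥ wlap W *ᵥ x ≤ r * (x ⬝ᵥ x)) : eig (wlap W) 1 ≤ r := by
  obtain ⟨v₀, -⟩ := Function.ne_iff.1 hx0
  have horth : (1 : Fin n → ℝ) ⬝ᵥ x = 0 := by simpa [dotProduct] using hx
  have hindep : LinearIndependent ℝ ![1, x] := by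
    refine LinearIndependent.pair_iff.2 fun a b hab => ?_
    have ha : a = 0 := by
      simpa [dotProduct_add, dotProduct_smul, horth, v₀.pos.ne'] using
        congrArg ((1 : Fin n → ℝ) ⬝ᵥ ·) hab
    exact ⟨ha, by simpa [ha, hx0] using hab⟩
  refine eig_le_of_forall_dotProduct_mulVec_le (wlap_isHermitian hW)
    (W := Submodule.span ℝ (Set.range ![1, x])) (by simp [finrank_span_eq_card hindep]) ?_
  intro z hz
  rw [Matrix.range_cons_cons_empty, Submodule.mem_span_pair] at hz
  obtain ⟨a, b, rfl⟩ := hz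
  have hform : (a • 1 + b • x) ⬝ᵥ wlap W *ᵥ (a • 1 + b • x) = b ^ 2 * (x ⬝ᵥ wlap W *ᵥ x) := by
    simp only [dotProduct_wlap_mulVec hW, edgeSum, Finset.mul_sum]
    refine Finset.sum_congr rfl fun e _ => ?_
    simp only [Pi.add_apply, Pi.smul_apply, smul_eq_mul, Pi.one_apply]
    ring
  have hnorm : (a • 1 + b • x) ⬝ᵥ (a • 1 + b • x) = n * a ^ 2 + b ^ 2 * (x ⬝ᵥ x) := by
    simp only [add_dotProduct, dotProduct_add, smul_dotProduct, dotProduct_smul, smul_eq_mul, horth,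
      dotProduct_comm x 1, one_dotProduct_one, Fintype.card_fin]
    ring
  calc (a • 1 + b • x) ⬝ᵥ wlap W *ᵥ (a • 1 + b • x) ≤ b ^ 2 * (r * (x ⬝ᵥ x)) := by
        rw [hform]
        gcongr
    _ ≤ r * ((a • 1 + b • x) ⬝ᵥ (a • 1 + b • x)) := by
        rw [hnorm]
        nlinarith [show 0 ≤ r * (n * a ^ 2) by positivity]

end Laplacian

section PlantedCut

/-- Indicator that `v` and `w` lie in different communities; its `edgeSum` is the size of the
planted cut. -/
def crossing (n : ℕ) (v w : Fin n) : ℝ := if sameSide n v w then 0 else 1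

/-- Indicator that the pair `x, y` contains `v`; its `edgeSum` is the degree of `v`. -/
def incident (v x y : Fin n) : ℝ := if x = v ∨ y = v then 1 else 0

/-- Coefficients whose `edgeSum` is `u₂⋆ᵀ L u₂⋆ - d[v]`, an upper bound for `λ₂ - d[v]`. -/
def cutMinusDeg (v x y : Fin n) : ℝ := 4 / n * crossing n x y - incident v x y

lemma crossing_self (v : Fin n) : crossing n v v = 0 := by simp [crossing, sameSide]

lemma crossing_comm (v w : Fin n) : crossing n v w = crossing n w v := by
  grind [crossing, sameSide]

lemma crossing_sq (v w : Fin n) : crossing n v w ^ 2 = crossing n v w := by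
  unfold crossing; split_ifs <;> simp

lemma crossing_mem_Icc (v w : Fin n) : crossing n v w ∈ Set.Icc 0 1 := by
  unfold crossing; split_ifs <;> simp

lemma incident_sq (v x y : Fin n) : incident v x y ^ 2 = incident v x y := by
  unfold incident; split_ifs <;> simp

lemma incident_mem_Icc (v x y : Fin n) : incident v x y ∈ Set.Icc 0 1 := by
  unfold incident; split_ifs <;> simp

lemma card_inP1 (n : ℕ) : (Finset.univ.filter fun v : Fin n => inP1 n v).card = n / 2 := by
  have h := Fin.card_filter_val_lt (n := n) (m := n / 2)
  rw [min_eq_right (Nat.div_le_self n 2)] at h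
  convert h
  rfl

lemma sum_u2star (hn : Even n) : ∑ v, u2star n v = 0 := by
  obtain ⟨m, rfl⟩ := hn
  have h := Finset.card_filter_add_card_filter_not (s := Finset.univ)
    fun v : Fin (m + m) => inP1 (m + m) v
  have h1 := card_inP1 (m + m)
  have h2 : (Finset.univ.filter fun v : Fin (m + m) => ¬ inP1 (m + m) v).card = m := by
    rw [Finset.card_univ, Fintype.card_fin] at h
    omega
  rw [show (m + m) / 2 = m by omega] at h1
  simp [u2star, Finset.sum_ite, h1, h2]

lemma u2star_mul_u2star (v w : Fin n) :
    u2star n v * u2star n w = (1 - 2 * crossing n v w) / n := by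
  have h : (1 / √(n : ℝ)) * (1 / √(n : ℝ)) = 1 / n := by
    rw [div_mul_div_comm, one_mul, Real.mul_self_sqrt n.cast_nonneg]
  by_cases hv : inP1 n v <;> by_cases hw : inP1 n w <;>
    simp only [u2star, crossing, sameSide, hv, hw, if_true, if_false, neg_mul, mul_neg, h] <;>
    norm_num <;> ring

lemma u2star_sub_sq (v w : Fin n) :
    (u2star n v - u2star n w) ^ 2 = 4 / n * crossing n v w := by
  rw [sub_sq, sq, sq, mul_assoc]
  simp only [u2star_mul_u2star, crossing_self]
  ring

lemma u2star_dotProduct_self (hn0 : n ≠ 0) : u2star n ⬝ᵥ u2star n = 1 := by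
  simp [dotProduct, u2star_mul_u2star, crossing_self, hn0]

lemma sum_crossing (hn : Even n) (v : Fin n) : ∑ w, crossing n v w = n / 2 := by
  have hn0 : (n : ℝ) ≠ 0 := Nat.cast_ne_zero.2 v.pos.ne'
  have h : ∑ w, u2star n v * u2star n w = 0 := by rw [← Finset.mul_sum, sum_u2star hn, mul_zero]
  simp only [u2star_mul_u2star, ← Finset.sum_div, Finset.sum_sub_distrib, ← Finset.mul_sum,
    Finset.sum_const, Finset.card_univ, Fintype.card_fin, nsmul_eq_mul, mul_one] at h
  rcases div_eq_zero_iff.1 h with h | h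
  · linarith
  · exact absurd h hn0

lemma sum_edgePairs_crossing (hn : Even n) :
    ∑ e ∈ edgePairs n, crossing n e.1 e.2 = (n : ℝ) ^ 2 / 4 := by
  have h := sum_edgePairs_add_swap (f := crossing n) crossing_self
  simp only [fun e : Fin n × Fin n => crossing_comm e.2 e.1, sum_crossing hn, Finset.sum_const,
    Finset.sum_add_distrib, Finset.card_univ, Fintype.card_fin, nsmul_eq_mul] at h
  linarith

lemma eig_wlap_one_le_crossing (hn : Even n) (hn0 : n ≠ 0) {W : Matrix (Fin n) (Fin n) ℝ}
    (hW : W.IsSymm) (hW0 : ∀ v w, 0 ≤ W v w) :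
    eig (wlap W) 1 ≤ 4 / n * edgeSum W (crossing n) := by
  have hu := u2star_dotProduct_self hn0
  refine eig_wlap_one_le hW (sum_u2star hn) (fun h => by simp [h] at hu) ?_ ?_
  · exact mul_nonneg (by positivity)
      (Finset.sum_nonneg fun e _ => mul_nonneg (hW0 _ _) (crossing_mem_Icc _ _).1)
  · rw [hu, mul_one, dotProduct_wlap_mulVec hW]
    simp only [u2star_sub_sq, edgeSum, Finset.mul_sum]
    exact (Finset.sum_congr rfl fun e _ => mul_left_comm _ _ _).le

lemma edgeSum_incident {W : Matrix (Fin n) (Fin n) ℝ} (hW : W.IsSymm) {v : Fin n}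
    (hv : W v v = 0) : edgeSum W (incident v) = ∑ w, W v w := by
  have hsum : ∑ x, ∑ y, (if x = v then W x y else 0) = ∑ w, W v w := by
    rw [Finset.sum_comm]
    simp
  rw [← hsum, ← sum_edgePairs_add_swap fun x => by grind, edgeSum]
  refine Finset.sum_congr rfl fun e he => ?_
  have hne : e.1 ≠ e.2 := (mem_edgePairs.1 he).ne
  grind [incident, hW.apply e.1 e.2]

lemma edgeSum_cutMinusDeg (W : Matrix (Fin n) (Fin n) ℝ) (v : Fin n) :
    edgeSum W (cutMinusDeg v) = 4 / n * edgeSum W (crossing n) - edgeSum W (incident v) := by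
  simp only [edgeSum, cutMinusDeg, mul_sub, Finset.sum_sub_distrib, Finset.mul_sum,
    mul_left_comm (4 / (n : ℝ))]

lemma eig_lap_one_sub_deg_le (hn : Even n) (G : SimpleGraph (Fin n)) (v : Fin n) :
    eig (lap G) 1 - deg G v ≤ edgeSum (adjM G) (cutMinusDeg v) := by
  rw [edgeSum_cutMinusDeg, edgeSum_incident (adjM_isSymm G) (adjM_self G v), sum_adjM]
  exact sub_le_sub_right
    (eig_wlap_one_le_crossing hn v.pos.ne' (adjM_isSymm G) (adjM_nonneg G)) _

lemma abs_cutMinusDeg_le_one (hn : 4 ≤ n) (v x y : Fin n) : |cutMinusDeg v x y| ≤ 1 := by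
  have hn' : 4 / (n : ℝ) ≤ 1 := div_le_one_of_le₀ (by exact_mod_cast hn) n.cast_nonneg
  have hcut := mul_le_one₀ hn' (crossing_mem_Icc x y).1 (crossing_mem_Icc x y).2
  have hcut0 := mul_nonneg (by positivity : 0 ≤ 4 / (n : ℝ)) (crossing_mem_Icc x y).1
  obtain ⟨hinc0, hinc⟩ := incident_mem_Icc v x y
  exact abs_sub_le_iff.2 ⟨by linarith, by linarith⟩

lemma cutMinusDeg_sq_le (v x y : Fin n) :
    cutMinusDeg v x y ^ 2 ≤ (4 / n) ^ 2 * crossing n x y + incident v x y := by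
  have hcross : 0 ≤ 4 / (n : ℝ) * crossing n x y * incident v x y :=
    mul_nonneg (mul_nonneg (by positivity) (crossing_mem_Icc x y).1) (incident_mem_Icc v x y).1
  rw [cutMinusDeg, sub_sq, mul_pow, crossing_sq, incident_sq]
  linarith

end PlantedCut

section EdgeProduct

lemma bernoulli_mgf_le {p c : ℝ} (hp : 0 ≤ p) (hc : |c| ≤ 1) :
    p * Real.exp c + (1 - p) ≤ Real.exp (p * (c + c ^ 2)) := by
  have hexp : Real.exp c - 1 ≤ c + c ^ 2 := by
    linarith [(abs_le.1 (Real.abs_exp_sub_one_sub_id_le hc)).2]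
  calc p * Real.exp c + (1 - p) = p * (Real.exp c - 1) + 1 := by ring
    _ ≤ p * (c + c ^ 2) + 1 := by gcongr
    _ ≤ Real.exp (p * (c + c ^ 2)) := Real.add_one_le_exp _

variable {P : Fin n → Fin n → ℝ} {μ : PMF (SimpleGraph (Fin n))}

lemma edgeSum_offP (c : Fin n → Fin n → ℝ) :
    edgeSum (offP P) c = ∑ e ∈ edgePairs n, P e.1 e.2 * c e.1 e.2 := by
  refine Finset.sum_congr rfl fun e he => ?_
  simp [offP, (mem_edgePairs.1 he).ne]

lemma IsEdgeProduct.toReal_apply (hμ : IsEdgeProduct P μ)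
    (hP : ∀ v w, v < w → P v w ∈ Set.Icc 0 1) (G : SimpleGraph (Fin n)) :
    (μ G).toReal = ∏ e ∈ edgePairs n, if G.Adj e.1 e.2 then P e.1 e.2 else 1 - P e.1 e.2 := by
  rw [hμ G, ENNReal.toReal_prod]
  refine Finset.prod_congr rfl fun e he => ?_
  obtain ⟨h0, h1⟩ := hP e.1 e.2 (mem_edgePairs.1 he)
  split_ifs
  · exact ENNReal.toReal_ofReal h0
  · exact ENNReal.toReal_ofReal (sub_nonneg.2 h1)

lemma IsEdgeProduct.mgf_edgeSum (hμ : IsEdgeProduct P μ)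
    (hP : ∀ v w, v < w → P v w ∈ Set.Icc 0 1) (c : Fin n → Fin n → ℝ) (t : ℝ) :
    mgf (fun G => edgeSum (adjM G) c) μ.toMeasure t
      = ∏ e ∈ edgePairs n, (P e.1 e.2 * Real.exp (t * c e.1 e.2) + (1 - P e.1 e.2)) := by
  rw [mgf, PMF.integral_eq_sum, ← sum_prod_edgePairs_ite]
  refine Finset.sum_congr rfl fun G _ => ?_
  rw [hμ.toReal_apply hP, edgeSum, Finset.mul_sum, Real.exp_sum, smul_eq_mul,
    ← Finset.prod_mul_distrib]
  refine Finset.prod_congr rfl fun e _ => ?_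
  by_cases h : G.Adj e.1 e.2 <;> simp [adjM, h]

lemma IsEdgeProduct.mgf_edgeSum_le (hμ : IsEdgeProduct P μ)
    (hP : ∀ v w, v < w → P v w ∈ Set.Icc 0 1) {c : Fin n → Fin n → ℝ} {t : ℝ}
    (hc : ∀ v w, |t * c v w| ≤ 1) :
    mgf (fun G => edgeSum (adjM G) c) μ.toMeasure t
      ≤ Real.exp (t * edgeSum (offP P) c + t ^ 2 * edgeSum (offP P) fun v w => c v w ^ 2) := by
  calc mgf (fun G => edgeSum (adjM G) c) μ.toMeasure t
      ≤ ∏ e ∈ edgePairs n, Real.exp (P e.1 e.2 * (t * c e.1 e.2 + (t * c e.1 e.2) ^ 2)) := by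
        rw [hμ.mgf_edgeSum hP]
        refine Finset.prod_le_prod (fun e he => ?_) fun e he => ?_
        all_goals obtain ⟨h0, h1⟩ := hP e.1 e.2 (mem_edgePairs.1 he)
        · exact add_nonneg (mul_nonneg h0 (Real.exp_pos _).le) (sub_nonneg.2 h1)
        · exact bernoulli_mgf_le h0 (hc _ _)
    _ = Real.exp (t * edgeSum (offP P) c + t ^ 2 * edgeSum (offP P) fun v w => c v w ^ 2) := by
        rw [← Real.exp_sum, edgeSum_offP, edgeSum_offP, Finset.mul_sum, Finset.mul_sum,
          ← Finset.sum_add_distrib]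
        congr 1
        exact Finset.sum_congr rfl fun e _ => by ring

/-- Bernstein's inequality in the Gaussian range `K * t ≤ 2 * V`; the Chernoff parameter is
`t / (2 * V)`. -/
lemma IsEdgeProduct.measureReal_le_edgeSum_le (hμ : IsEdgeProduct P μ)
    (hP : ∀ v w, v < w → P v w ∈ Set.Icc 0 1) {c : Fin n → Fin n → ℝ} {K V t : ℝ}
    (hc : ∀ v w, |c v w| ≤ K) (hV : 0 < V) (hcV : edgeSum (offP P) (fun v w => c v w ^ 2) ≤ V)
    (ht : 0 ≤ t) (htV : K * t ≤ 2 * V) :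
    μ.toMeasure.real {G | edgeSum (offP P) c + t ≤ edgeSum (adjM G) c}
      ≤ Real.exp (-(t ^ 2 / (4 * V))) := by
  set s := t / (2 * V) with hs
  set m := edgeSum (offP P) c
  have hs0 : 0 ≤ s := by positivity
  have hsc : ∀ v w, |s * c v w| ≤ 1 := fun v w => by
    calc |s * c v w| = s * |c v w| := by rw [abs_mul, abs_of_nonneg hs0]
      _ ≤ s * K := by gcongr; exact hc v w
      _ = K * t / (2 * V) := by rw [hs]; ring
      _ ≤ 1 := div_le_one_of_le₀ htV (by positivity)
  calc μ.toMeasure.real {G | m + t ≤ edgeSum (adjM G) c}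
      ≤ Real.exp (-s * (m + t)) * mgf (fun G => edgeSum (adjM G) c) μ.toMeasure s :=
        measure_ge_le_exp_mul_mgf _ hs0 .of_finite
    _ ≤ Real.exp (-s * (m + t)) * Real.exp (s * m + s ^ 2 * V) := by
        gcongr
        exact (hμ.mgf_edgeSum_le hP hsc).trans (by gcongr)
    _ = Real.exp (-(t ^ 2 / (4 * V))) := by
        rw [← Real.exp_add, hs]
        congr 1
        field_simp
        ring

end EdgeProduct

section BlockModel

variable {p pbar q : ℝ} {P : Fin n → Fin n → ℝ}

lemma offP_isSymm (hP : ∀ v w, P v w = P w v) : (offP P).IsSymm :=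
  Matrix.IsSymm.ext fun v w => by simp [offP, hP w v, eq_comm]

lemma NSSBMprob.mem_Icc (hP : NSSBMprob n p pbar q P) (hq : 0 ≤ q) (hqp : q ≤ p)
    (hpp : p ≤ pbar) {v w : Fin n} (hvw : v ≠ w) : P v w ∈ Set.Icc 0 pbar := by
  by_cases h : sameSide n v w
  · exact ⟨(hq.trans hqp).trans (hP.2.1 v w hvw h).1, (hP.2.1 v w hvw h).2⟩
  · rw [hP.2.2 v w h]
    exact ⟨hq, hqp.trans hpp⟩

lemma NSSBMprob.edgeSum_offP_crossing (hP : NSSBMprob n p pbar q P) (hn : Even n) :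
    edgeSum (offP P) (crossing n) = q * (n ^ 2 / 4) := by
  rw [edgeSum_offP, ← sum_edgePairs_crossing hn, Finset.mul_sum]
  refine Finset.sum_congr rfl fun e _ => ?_
  by_cases h : sameSide n e.1 e.2
  · simp [crossing, h]
  · rw [hP.2.2 _ _ h]

lemma NSSBMprob.le_sum_offP (hP : NSSBMprob n p pbar q P) (hn : Even n) (v : Fin n) :
    n * (p + q) / 2 - p ≤ ∑ w, offP P v w := by
  have hle : ∀ w, p - (p - q) * crossing n v w - (if w = v then p else 0) ≤ offP P v w := by
    intro w
    rcases eq_or_ne v w with rfl | hvw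
    · simp [crossing_self, offP]
    · by_cases h : sameSide n v w
      · simpa [hvw, hvw.symm, crossing, h, offP] using (hP.2.1 v w hvw h).1
      · simp [hvw, hvw.symm, crossing, h, offP, hP.2.2 v w h]
  calc n * (p + q) / 2 - p
      = ∑ w, (p - (p - q) * crossing n v w - if w = v then p else 0) := by
        simp only [Finset.sum_sub_distrib, ← Finset.mul_sum, sum_crossing hn, Finset.sum_const,
          Finset.card_univ, Fintype.card_fin, nsmul_eq_mul, Finset.sum_ite_eq', Finset.mem_univ,
          if_true]
        ring
    _ ≤ ∑ w, offP P v w := Finset.sum_le_sum fun w _ => hle w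

lemma NSSBMprob.sum_offP_le (hP : NSSBMprob n p pbar q P) (hq : 0 ≤ q) (hqp : q ≤ p)
    (hpp : p ≤ pbar) (v : Fin n) : ∑ w, offP P v w ≤ n * pbar := by
  refine (Finset.sum_le_card_nsmul _ _ pbar fun w _ => ?_).trans (by simp)
  rcases eq_or_ne v w with rfl | hvw
  · simpa [offP] using hq.trans (hqp.trans hpp)
  · simpa [offP, hvw] using (hP.mem_Icc hq hqp hpp hvw).2

lemma NSSBMprob.edgeSum_offP_cutMinusDeg_le (hP : NSSBMprob n p pbar q P) (hn : Even n)
    (v : Fin n) : edgeSum (offP P) (cutMinusDeg v) ≤ p - n * (p - q) / 2 := by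
  have hn0 : (n : ℝ) ≠ 0 := Nat.cast_ne_zero.2 v.pos.ne'
  rw [edgeSum_cutMinusDeg, edgeSum_incident (offP_isSymm hP.1) (by simp [offP]),
    hP.edgeSum_offP_crossing hn]
  have hcut : 4 / (n : ℝ) * (q * (n ^ 2 / 4)) = n * q := by field_simp
  linarith [hP.le_sum_offP hn v]

lemma NSSBMprob.edgeSum_offP_cutMinusDeg_sq_le (hP : NSSBMprob n p pbar q P) (hn : Even n)
    (h4 : 4 ≤ n) (hq : 0 ≤ q) (hqp : q ≤ p) (hpp : p ≤ pbar) (v : Fin n) :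
    edgeSum (offP P) (fun x y => cutMinusDeg v x y ^ 2) ≤ 2 * (n * pbar) := by
  have hn4 : (4 : ℝ) ≤ n := by exact_mod_cast h4
  calc edgeSum (offP P) (fun x y => cutMinusDeg v x y ^ 2)
      ≤ (4 / n) ^ 2 * edgeSum (offP P) (crossing n) + edgeSum (offP P) (incident v) := by
        simp only [edgeSum_offP, Finset.mul_sum, ← Finset.sum_add_distrib]
        refine Finset.sum_le_sum fun e he => ?_
        have h0 := (hP.mem_Icc hq hqp hpp (mem_edgePairs.1 he).ne).1
        exact (mul_le_mul_of_nonneg_left (cutMinusDeg_sq_le v e.1 e.2) h0).trans_eq (by ring)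
    _ = 4 * q + ∑ w, offP P v w := by
        rw [hP.edgeSum_offP_crossing hn, edgeSum_incident (offP_isSymm hP.1) (by simp [offP])]
        field_simp
    _ ≤ n * pbar + n * pbar := by
        gcongr
        · exact hqp.trans hpp
        · exact hP.sum_offP_le hq hqp hpp v
    _ = 2 * (n * pbar) := by ring

lemma mul_log_le_of_gap {n p pbar q : ℝ} (hn : 1 ≤ n) (hpbar : 0 < pbar)
    (hgap : 80 * (√(n * pbar * Real.log n) + Real.log n) ≤ n * (p - q)) :
    11 * Real.log n ≤ (n * (p - q) / 8) ^ 2 / (4 * (2 * (n * pbar))) := by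
  have hlog := Real.log_nonneg hn
  have hsqrt : 80 * √(n * pbar * Real.log n) ≤ n * (p - q) := by linarith
  have hsq : 80 ^ 2 * (n * pbar * Real.log n) ≤ (n * (p - q)) ^ 2 := by
    rw [← Real.sq_sqrt (by positivity : 0 ≤ n * pbar * Real.log n), ← mul_pow]
    exact pow_le_pow_left₀ (by positivity) hsqrt 2
  rw [le_div_iff₀ (by positivity)]
  nlinarith [show 0 ≤ n * pbar * Real.log n by positivity]

lemma eight_le_of_gap {n p pbar q : ℝ} (hn : 2 ≤ n)
    (hgap : 80 * (√(n * pbar * Real.log n) + Real.log n) ≤ n * (p - q)) :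
    8 ≤ n * (p - q) := by
  have hlog : Real.log 2 ≤ Real.log n := Real.log_le_log two_pos hn
  linarith [Real.log_two_gt_d9, Real.sqrt_nonneg (n * pbar * Real.log n)]

lemma NSSBMprob.measureReal_deg_sub_eig_le {μ : PMF (SimpleGraph (Fin n))}
    (hP : NSSBMprob n p pbar q P) (hμ : IsEdgeProduct P μ) (hn : Even n)
    (hq : 0 ≤ q) (hqp : q < p) (hpp : p ≤ pbar) (hpbar : pbar ≤ 1)
    (hgap : 80 * (√(n * pbar * Real.log n) + Real.log n) ≤ n * (p - q)) (v : Fin n) :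
    μ.toMeasure.real {G | (deg G v : ℝ) - eig (lap G) 1 ≤ n * (p - q) / 4}
      ≤ 1 / (n : ℝ) ^ 11 := by
  have hn2 : 2 ≤ n := Nat.le_of_dvd v.pos hn.two_dvd
  have hn0 : (0 : ℝ) < n := Nat.cast_pos.2 v.pos
  have hD := eight_le_of_gap (by exact_mod_cast hn2) hgap
  have hDn : n * (p - q) ≤ n * pbar := by gcongr; linarith
  have hn4 : 4 ≤ n := by
    have : (8 : ℝ) ≤ n := hD.trans (hDn.trans (mul_le_of_le_one_right hn0.le hpbar))
    exact_mod_cast (by linarith : (4 : ℝ) ≤ n)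
  have hP01 : ∀ x y, x < y → P x y ∈ Set.Icc 0 1 := fun x y hxy =>
    Set.Icc_subset_Icc_right hpbar (hP.mem_Icc hq hqp.le hpp hxy.ne)
  calc μ.toMeasure.real {G | (deg G v : ℝ) - eig (lap G) 1 ≤ n * (p - q) / 4}
      ≤ μ.toMeasure.real {G | edgeSum (offP P) (cutMinusDeg v) + n * (p - q) / 8
          ≤ edgeSum (adjM G) (cutMinusDeg v)} := by
        refine measureReal_mono fun G (hG : (deg G v : ℝ) - eig (lap G) 1 ≤ _) => ?_
        have hmean := hP.edgeSum_offP_cutMinusDeg_le hn v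
        have hstat := eig_lap_one_sub_deg_le hn G v
        simp only [Set.mem_ofPred_eq]
        linarith
    _ ≤ Real.exp (-((n * (p - q) / 8) ^ 2 / (4 * (2 * (n * pbar))))) :=
        hμ.measureReal_le_edgeSum_le hP01 (abs_cutMinusDeg_le_one hn4 v) (by linarith)
          (hP.edgeSum_offP_cutMinusDeg_sq_le hn hn4 hq hqp.le hpp v) (by linarith) (by linarith)
    _ ≤ Real.exp (-(11 * Real.log n)) := by
        gcongr
        exact mul_log_le_of_gap (by exact_mod_cast v.pos) (by linarith) hgap
    _ = 1 / (n : ℝ) ^ 11 := by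
        rw [Real.exp_neg, one_div, ← Nat.cast_ofNat, Real.exp_nat_mul, Real.exp_log hn0]

theorem deg_minus_lambda2_positive_general {μ : PMF (SimpleGraph (Fin n))} {δ : ℝ}
    (hP : NSSBMprob n p pbar q P) (hμ : IsEdgeProduct P μ) (hn : Even n)
    (hq : 0 ≤ q) (hqp : q < p) (hpp : p ≤ pbar) (hpbar : pbar ≤ 1)
    (hgap : 80 * (√(n * pbar * Real.log n) + Real.log n) ≤ n * (p - q))
    (hδ : 1 / (n : ℝ) ^ 10 ≤ δ) :
    1 - ENNReal.ofReal δ ≤ μ.toMeasure {G |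
      ∀ v : Fin n, (n : ℝ) * (p - q) / 4 < (deg G v : ℝ) - eig (lap G) 1} := by
  set bad : Fin n → Set (SimpleGraph (Fin n)) := fun v =>
    {G | (deg G v : ℝ) - eig (lap G) 1 ≤ n * (p - q) / 4} with hbad
  have hunion : μ.toMeasure.real (⋃ v, bad v) ≤ δ := by
    calc μ.toMeasure.real (⋃ v, bad v) ≤ ∑ v, μ.toMeasure.real (bad v) :=
          measureReal_iUnion_fintype_le bad
      _ ≤ ∑ _v : Fin n, 1 / (n : ℝ) ^ 11 := Finset.sum_le_sum fun v _ =>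
          hP.measureReal_deg_sub_eig_le hμ hn hq hqp hpp hpbar hgap v
      _ = 1 / (n : ℝ) ^ 10 := by
          rw [Finset.sum_const, Finset.card_univ, Fintype.card_fin, nsmul_eq_mul]
          field_simp
      _ ≤ δ := hδ
  have hgood : {G | ∀ v : Fin n, (n : ℝ) * (p - q) / 4 < (deg G v : ℝ) - eig (lap G) 1}
      = (⋃ v, bad v)ᶜ := by
    ext G
    simp only [hbad, Set.mem_compl_iff, Set.mem_iUnion, not_exists, Set.mem_ofPred_eq, not_le]
  rw [hgood, prob_compl_eq_one_sub MeasurableSpace.measurableSet_top, ← ofReal_measureReal]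
  gcongr

end BlockModel

/-- **Lemma (degrees dominate λ₂).**
In the NSSBM setting with `α = p̄/(p-q)` constant and the gap condition holding for a
sufficiently large universal constant `C₀`, for `n` sufficiently large (depending only on
`α`) and any `δ ≥ n⁻¹⁰`, with probability at least `1 - δ`, every vertex `v` satisfies
`d[v] - λ₂ > n(p-q)/4`. -/
theorem deg_minus_lambda2_positive :
    ∃ C0 : ℝ, 0 < C0 ∧ ∀ α : ℝ, ∃ N : ℕ, ∀ n : ℕ, N ≤ n → Even n →
      ∀ p pbar q δ : ℝ, 0 ≤ q → q < p → p ≤ pbar → pbar ≤ 1 →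
        pbar / (p - q) = α → 1 / (n : ℝ) ^ 10 ≤ δ →
      ∀ (P : Fin n → Fin n → ℝ) (μ : PMF (SimpleGraph (Fin n))),
        NSSBMprob n p pbar q P → IsEdgeProduct P μ →
        C0 * (Real.sqrt ((n : ℝ) * pbar * Real.log n) + Real.log n) ≤ (n : ℝ) * (p - q) →
        1 - ENNReal.ofReal δ ≤ μ.toMeasure {G |
          ∀ v : Fin n, (n : ℝ) * (p - q) / 4 < (deg G v : ℝ) - eig (lap G) 1} :=
  ⟨80, by norm_num, fun _ => ⟨0, fun _ _ hn _ _ _ _ hq hqp hpp hpbar _ hδ _ _ hP hμ hgap =>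
    deg_minus_lambda2_positive_general hP hμ hn hq hqp hpp hpbar hgap hδ⟩⟩

end
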